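/- Let A be a ring and E a left A-module of finite length with set of composition factors 𝒱 = Supp(E). Let 𝒱₀ ⊆ 𝒱 be a subfamily such that Ext¹_A(V,W) = 0 for every V ∈ 𝒱₀ and every W ∈ 𝒱 ∖ 𝒱₀. Then E has a submodule E′ whose composition factors (counted with multiplicity) are exactly the composition factors of E lying in 𝒱₀, and the composition factors of E/E′ are exactly those of E lying in 𝒱 ∖ 𝒱₀. -/

import Mathlib

open CategoryTheory Opposite

noncomputable section

/-- `Ext¹` of left `A`-modules (as a `ℤ`-module). -/
def Ext1 (A : Type) [Ring A] (M N : Type) [AddCommGroup M] [Module A M]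
    [AddCommGroup N] [Module A N] : ModuleCat ℤ :=
  ((Ext ℤ (ModuleCat A) 1).obj (op (ModuleCat.of A M))).obj (ModuleCat.of A N)

universe u v w

/-!
A chain of submodules is recorded as the list of its factors, from bottom to top. If `V j` sits
directly below `V i` in the chain, `M ≤ N ≤ K`, and `Ext¹(V i, V j) = 0`, then the extension `K / M`
of `K / N ≅ V i` by `N / M ≅ V j` splits: there is `N'` with `N' ⊓ N = M` and `N' ⊔ N = K`.
By the second isomorphism theorem, replacing `N` by `N'` exchanges the two factors. Such exchanges
move every factor inside `𝒱₀` below all those outside `𝒱₀`, and only pairs that are initially in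
the wrong order ever have to be exchanged.
-/

section FilterAppend

lemma getElem_filter_append_filter_not {α : Type*} (p : α → Bool) (l : List α) {i : ℕ}
    (hi : i < (l.filter p ++ l.filter (!p ·)).length) :
    p (l.filter p ++ l.filter (!p ·))[i] ↔ i < (l.filter p).length := by
  rw [List.getElem_append]
  split_ifs with h
  · simpa [h] using (List.mem_filter.1 (List.getElem_mem h)).2
  · simpa [h] using (List.mem_filter.1 (List.getElem_mem (l := l.filter (!p ·)) _)).2

lemma exists_ofFn_eq_of_perm_finRange {r : ℕ} {l : List (Fin r)}
    (h : l.Perm (List.finRange r)) : ∃ σ : Equiv.Perm (Fin r), List.ofFn σ = l := by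
  have hlen : l.length = r := by simpa using h.length_eq
  have hnodup : l.Nodup := h.nodup_iff.2 (List.nodup_finRange r)
  refine ⟨(finCongr hlen.symm).trans
    (hnodup.getEquivOfForallMemList l fun i => h.mem_iff.2 (List.mem_finRange i)), ?_⟩
  exact List.ext_getElem (by simp [hlen]) (by simp)

lemma length_filter_mem_finRange {r : ℕ} (S : Finset (Fin r)) :
    ((List.finRange r).filter (· ∈ S)).length = S.card := by
  rw [← List.toFinset_card_of_nodup ((List.nodup_finRange r).filter _)]
  congr
  ext
  simp

end FilterAppend

section AbelianCategory

variable {R : Type*} [Ring R] {C : Type*} [Category* C] [Abelian C] [Linear R C]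
  [EnoughProjectives C]

lemma exists_d_comp_eq_of_isZero_ext {X Y : C} {n : ℕ}
    (h : Limits.IsZero (((Ext R C (n + 1)).obj (op X)).obj Y)) (P : ProjectiveResolution X)
    (c : P.complex.X (n + 1) ⟶ Y) (hc : P.complex.d (n + 2) (n + 1) ≫ c = 0) :
    ∃ s : P.complex.X n ⟶ Y, P.complex.d (n + 1) n ≫ s = c := by
  have hExact := h.of_iso (P.isoExt (R := R) (n + 1) Y).symm
  rw [← HomologicalComplex.exactAt_iff_isZero_homology,
    HomologicalComplex.exactAt_iff' _ n (n + 1) (n + 2) (by simp) (by simp),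
    ShortComplex.moduleCat_exact_iff] at hExact
  exact hExact c hc

end AbelianCategory

section ProjectivePresentation

variable {A : Type*} [Ring A] {V W K N P : Type*} [AddCommGroup V] [Module A V]
  [AddCommGroup W] [Module A W] [AddCommGroup K] [Module A K] [AddCommGroup N] [Module A N]
  [AddCommGroup P] [Module A P]

lemma exists_comp_eq_of_ker_le_ker {p : P →ₗ[A] K} (hp : Function.Surjective p)
    {q : P →ₗ[A] W} (hpq : LinearMap.ker p ≤ LinearMap.ker q) :
    ∃ t : K →ₗ[A] W, t ∘ₗ p = q := by
  refine ⟨(LinearMap.ker p).liftQ q hpq ∘ₗ (p.quotKerEquivOfSurjective hp).symm, ?_⟩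
  ext x
  simp

lemma exists_extend_of_projective_presentation [Module.Projective A P] {π : P →ₗ[A] V}
    (hπ : Function.Surjective π)
    (hker : ∀ c : LinearMap.ker π →ₗ[A] W, ∃ s : P →ₗ[A] W, s ∘ₗ (LinearMap.ker π).subtype = c)
    {i : N →ₗ[A] K} {g : K →ₗ[A] V} (hi : Function.Injective i) (hg : Function.Surjective g)
    (hig : Function.Exact i g) (f : N →ₗ[A] W) :
    ∃ t : K →ₗ[A] W, t ∘ₗ i = f := by
  obtain ⟨p, hp⟩ := Module.projective_lifting_property g π hg
  have hgp (x : P) : g (p x) = π x := LinearMap.congr_fun hp x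
  have hp_mem (x : LinearMap.ker π) : p x ∈ LinearMap.range i :=
    (hig _).1 ((hgp x).trans x.2)
  let q : LinearMap.ker π →ₗ[A] N := (LinearEquiv.ofInjective i hi).symm.toLinearMap ∘ₗ
    (p ∘ₗ (LinearMap.ker π).subtype).codRestrict _ hp_mem
  have hiq (x : LinearMap.ker π) : i (q x) = p x :=
    congrArg Subtype.val ((LinearEquiv.ofInjective i hi).apply_symm_apply ⟨_, hp_mem x⟩)
  obtain ⟨s, hs⟩ := hker (f ∘ₗ q)
  -- `i` and `p` present `K` as a quotient of `N × P`, so it suffices to define `t` on `N × P`.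
  have hsurj : Function.Surjective (i.coprod p) := fun k => by
    obtain ⟨x, hx⟩ := hπ (g k)
    obtain ⟨n, hn⟩ := (hig (k - p x)).1 (by rw [map_sub, hgp, hx, sub_self])
    exact ⟨(n, x), by simp [hn]⟩
  have hle : LinearMap.ker (i.coprod p) ≤ LinearMap.ker (f.coprod s) := by
    rintro ⟨n, x⟩ (hnx : i n + p x = 0)
    have hx : π x = 0 := by
      rw [← hgp, eq_neg_of_add_eq_zero_right hnx, map_neg, hig.apply_apply_eq_zero, neg_zero]
    have hnq : n + q ⟨x, hx⟩ = 0 := hi (by rw [map_add, hiq, hnx, map_zero])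
    have hsx : s x = f (q ⟨x, hx⟩) := LinearMap.congr_fun hs ⟨x, hx⟩
    change f n + s x = 0
    rw [hsx, ← map_add, hnq, map_zero]
  obtain ⟨t, ht⟩ := exists_comp_eq_of_ker_le_ker hsurj hle
  refine ⟨t, ?_⟩
  rw [← LinearMap.coprod_inl i p, ← LinearMap.comp_assoc, ht, LinearMap.coprod_inl]

end ProjectivePresentation

section ExtOne

/-- Vanishing of the group `Ext¹_A(V, W)`. Unlike `Ext1`, this makes sense for a ring and modules
in any universes for which there are enough projectives. -/
abbrev ExtOneIsZero (A : Type u) [Ring A] [Small.{v} A] (V W : Type v) [AddCommGroup V]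
    [Module A V] [AddCommGroup W] [Module A W] : Prop :=
  Limits.IsZero (((Ext ℤ (ModuleCat.{v} A) 1).obj (op (.of A V))).obj (.of A W))

variable {A : Type u} [Ring A] [Small.{v} A] {V W : Type v} [AddCommGroup V] [Module A V]
  [AddCommGroup W] [Module A W]

lemma exists_extend_ker_of_extOneIsZero (h : ExtOneIsZero A V W)
    (P : ProjectiveResolution (ModuleCat.of A V)) (f : LinearMap.ker (P.π.f 0).hom →ₗ[A] W) :
    ∃ s : P.complex.X 0 →ₗ[A] W, s ∘ₗ (LinearMap.ker (P.π.f 0).hom).subtype = f := by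
  have hπd (y : P.complex.X 1) : (P.complex.d 1 0).hom y ∈ LinearMap.ker (P.π.f 0).hom :=
    LinearMap.congr_fun (congrArg ModuleCat.Hom.hom P.complex_d_comp_π_f_zero) y
  let d := (P.complex.d 1 0).hom.codRestrict _ hπd
  have hdd (z : P.complex.X 2) : d ((P.complex.d 2 1).hom z) = 0 :=
    Subtype.ext (LinearMap.congr_fun (congrArg ModuleCat.Hom.hom (P.complex.d_comp_d 2 1 0)) z)
  obtain ⟨s, hs⟩ := exists_d_comp_eq_of_isZero_ext h P (ModuleCat.ofHom (f ∘ₗ d)) <| by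
    ext z
    exact (congrArg f (hdd z)).trans (map_zero f)
  refine ⟨s.hom, LinearMap.ext fun x => ?_⟩
  obtain ⟨y, hy⟩ := (ShortComplex.moduleCat_exact_iff _).1 P.exact₀ x x.2
  obtain rfl : d y = x := Subtype.ext hy
  exact LinearMap.congr_fun (congrArg ModuleCat.Hom.hom hs) y

lemma exists_extend_of_extOneIsZero {K N : Type*} [AddCommGroup K] [Module A K]
    [AddCommGroup N] [Module A N] (h : ExtOneIsZero A V W) {i : N →ₗ[A] K} {g : K →ₗ[A] V}
    (hi : Function.Injective i) (hg : Function.Surjective g) (hig : Function.Exact i g)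
    (f : N →ₗ[A] W) : ∃ t : K →ₗ[A] W, t ∘ₗ i = f := by
  let P := projectiveResolution (ModuleCat.of A V)
  have : Module.Projective A (P.complex.X 0) :=
    (IsProjective.iff_projective _).2 (P.projective 0)
  exact exists_extend_of_projective_presentation
    ((ModuleCat.epi_iff_surjective (P.π.f 0)).1 inferInstance)
    (exists_extend_ker_of_extOneIsZero h P) hi hg hig f

lemma exists_inf_eq_sup_eq_of_extOneIsZero {E : Type*} [AddCommGroup E] [Module A E]
    (h : ExtOneIsZero A V W) {M N K : Submodule A E} (hMN : M ≤ N) (hNK : N ≤ K)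
    (eW : (N ⧸ M.submoduleOf N) ≃ₗ[A] W) (eV : (K ⧸ N.submoduleOf K) ≃ₗ[A] V) :
    ∃ N' : Submodule A E, N' ⊓ N = M ∧ N' ⊔ N = K := by
  let f : N →ₗ[A] W := eW ∘ₗ (M.submoduleOf N).mkQ
  have hf : Function.Surjective f := eW.surjective.comp (Submodule.mkQ_surjective _)
  have hfM (n : N) : f n = 0 ↔ (n : E) ∈ M :=
    eW.map_eq_zero_iff.trans (Submodule.Quotient.mk_eq_zero _)
  let g : K →ₗ[A] V := eV ∘ₗ (N.submoduleOf K).mkQ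
  have hg : Function.Surjective g := eV.surjective.comp (Submodule.mkQ_surjective _)
  have hgN (x : K) : g x = 0 ↔ (x : E) ∈ N :=
    eV.map_eq_zero_iff.trans (Submodule.Quotient.mk_eq_zero _)
  have hexact : Function.Exact (Submodule.inclusion hNK) g := fun x =>
    (hgN x).trans ⟨fun hx => ⟨⟨x, hx⟩, rfl⟩, by rintro ⟨n, rfl⟩; exact n.2⟩
  obtain ⟨t, ht⟩ := exists_extend_of_extOneIsZero h (Submodule.inclusion_injective hNK)
    hg hexact f
  have htf (n : N) : t (Submodule.inclusion hNK n) = f n := LinearMap.congr_fun ht n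
  refine ⟨(LinearMap.ker t).map K.subtype, le_antisymm ?_ ?_, le_antisymm ?_ ?_⟩
  · rintro _ ⟨⟨x, hxt, rfl⟩, hx⟩
    exact (hfM ⟨x, hx⟩).1 ((htf ⟨x, hx⟩).symm.trans hxt)
  · intro x hx
    have hxN := hMN hx
    exact ⟨⟨⟨x, hNK hxN⟩, (htf ⟨x, hxN⟩).trans ((hfM ⟨x, hxN⟩).2 hx), rfl⟩, hxN⟩
  · exact sup_le (Submodule.map_subtype_le _ _) hNK
  · intro x hx
    obtain ⟨n, hn⟩ := hf (t ⟨x, hx⟩)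
    refine Submodule.mem_sup.2 ⟨x - n,
      ⟨⟨x, hx⟩ - Submodule.inclusion hNK n, ?_, rfl⟩, n, n.2, by simp⟩
    simp [htf, hn]

end ExtOne

section Filtration

variable {A : Type u} [Ring A] {E : Type w} [AddCommGroup E] [Module A E]

/-- `HasFactors V l M K` says that there is a chain of submodules from `M` up to `K` whose
successive quotients are, from bottom to top, isomorphic to the `V i` for `i` running through the
list `l`. -/
inductive HasFactors {ι : Type*} (V : ι → Type v) [∀ i, AddCommGroup (V i)]
    [∀ i, Module A (V i)] : List ι → Submodule A E → Submodule A E → Prop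
  | nil (M : Submodule A E) : HasFactors V [] M M
  | cons {i : ι} {l : List ι} {M N K : Submodule A E} (hle : M ≤ N)
      (e : Nonempty ((N ⧸ M.submoduleOf N) ≃ₗ[A] V i)) (h : HasFactors V l N K) :
      HasFactors V (i :: l) M K

namespace HasFactors

variable {ι : Type*} {V : ι → Type v} [∀ i, AddCommGroup (V i)] [∀ i, Module A (V i)]
  {M K : Submodule A E} {l l₁ l₂ : List ι} {i j : ι}

lemma swap [Small.{v} A] (hExt : ExtOneIsZero A (V i) (V j))
    (h : HasFactors V (j :: i :: l) M K) : HasFactors V (i :: j :: l) M K := by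
  obtain _ | @⟨_, _, _, N, _, hMN, ⟨ej⟩, _ | ⟨hNL, ⟨ei⟩, hl⟩⟩ := h
  obtain ⟨N', rfl, rfl⟩ := exists_inf_eq_sup_eq_of_extOneIsZero hExt hMN hNL ej ei
  have eN : (N ⧸ (N' ⊓ N).submoduleOf N) ≃ₗ[A] (↥(N' ⊔ N) ⧸ N'.submoduleOf (N' ⊔ N)) := by
    rw [inf_comm, sup_comm]
    exact LinearMap.quotientInfEquivSupQuotient N N'
  exact .cons inf_le_left ⟨(LinearMap.quotientInfEquivSupQuotient N' N).trans ei⟩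
    (.cons le_sup_left ⟨eN.symm.trans ej⟩ hl)

lemma append_cons_of_cons_append [Small.{v} A]
    (hExt : ∀ i ∈ l₁, ExtOneIsZero A (V i) (V j))
    (h : HasFactors V (j :: (l₁ ++ l₂)) M K) : HasFactors V (l₁ ++ j :: l₂) M K := by
  induction l₁ generalizing M with
  | nil => exact h
  | cons i l₁ ih =>
    rw [List.forall_mem_cons] at hExt
    obtain _ | ⟨hle, e, h'⟩ := h.swap hExt.1
    exact .cons hle e (ih hExt.2 h')

lemma filter_append_filter_not [Small.{v} A] (p : ι → Bool)
    (hExt : l.Pairwise fun j i => p i → ¬ p j → ExtOneIsZero A (V i) (V j))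
    (h : HasFactors V l M K) : HasFactors V (l.filter p ++ l.filter (!p ·)) M K := by
  induction h with
  | nil M => exact .nil M
  | @cons j l M N K hle e _ ih =>
    rw [List.pairwise_cons] at hExt
    have h' := HasFactors.cons hle e (ih hExt.2)
    by_cases hj : p j
    · simpa [hj] using h'
    · rw [List.filter_cons_of_neg hj, List.filter_cons_of_pos (by simpa using hj)]
      refine h'.append_cons_of_cons_append fun i hi => ?_
      obtain ⟨hil, hpi⟩ := List.mem_filter.1 hi
      exact hExt.1 i hil hpi hj

lemma ofFn_iff {r : ℕ} {s : Fin r → ι} :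
    HasFactors V (List.ofFn s) M K ↔ ∃ G : Fin (r + 1) → Submodule A E,
      Monotone G ∧ G 0 = M ∧ G (Fin.last r) = K ∧
      ∀ i : Fin r, Nonempty
        ((G i.succ ⧸ (G i.castSucc).submoduleOf (G i.succ)) ≃ₗ[A] V (s i)) := by
  simp only [Fin.monotone_iff_le_succ]
  induction r generalizing M with
  | zero =>
    rw [List.ofFn_zero]
    constructor
    · rintro ⟨⟩
      exact ⟨fun _ => K, by simp⟩
    · rintro ⟨G, -, rfl, rfl, -⟩
      exact .nil _
  | succ r ih =>
    rw [List.ofFn_succ]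
    constructor
    · rintro (_ | ⟨hle, e, h⟩)
      obtain ⟨G, hG, rfl, rfl, hV⟩ := ih.1 h
      exact ⟨Fin.cons M G, Fin.cases hle hG, rfl, rfl, Fin.cases e hV⟩
    · rintro ⟨G, hG, rfl, rfl, hV⟩
      exact .cons (hG 0) (hV 0) (ih.2 ⟨Fin.tail G, fun i => hG i.succ, rfl, rfl,
        fun i => hV i.succ⟩)

end HasFactors

end Filtration

theorem exists_submodule_with_prescribed_factors_general
    {A : Type u} [Ring A] [Small.{v} A] {E : Type w} [AddCommGroup E] [Module A E]
    {r : ℕ} {V : Fin r → Type v} [∀ i, AddCommGroup (V i)] [∀ i, Module A (V i)]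
    {F : Fin (r + 1) → Submodule A E} (hmono : Monotone F)
    (hfactor : ∀ i : Fin r, Nonempty
      ((↥(F i.succ) ⧸ Submodule.comap (F i.succ).subtype (F i.castSucc)) ≃ₗ[A] V i))
    (S : Finset (Fin r))
    (hSext : ∀ i ∈ S, ∀ j ∉ S, j < i → ExtOneIsZero A (V i) (V j)) :
    ∃ (σ : Equiv.Perm (Fin r)) (G : Fin (r + 1) → Submodule A E),
      Monotone G ∧ G 0 = F 0 ∧ G (Fin.last r) = F (Fin.last r) ∧
      (∀ i : Fin r, Nonempty
        ((↥(G i.succ) ⧸ Submodule.comap (G i.succ).subtype (G i.castSucc)) ≃ₗ[A] V (σ i))) ∧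
      (∀ i : Fin r, (i : ℕ) < S.card ↔ σ i ∈ S) := by
  have hF : HasFactors V (List.finRange r) (F 0) (F (Fin.last r)) := by
    rw [← List.ofFn_id]
    exact HasFactors.ofFn_iff.2 ⟨F, hmono, rfl, rfl, hfactor⟩
  have hsorted := hF.filter_append_filter_not (decide <| · ∈ S) <|
    (List.pairwise_lt_finRange r).imp fun hji hi hj =>
      hSext _ (by simpa using hi) _ (by simpa using hj) hji
  obtain ⟨σ, hσ⟩ := exists_ofFn_eq_of_perm_finRange
    (List.filter_append_perm (decide <| · ∈ S) (List.finRange r))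
  rw [← hσ] at hsorted
  obtain ⟨G, hG, hG0, hGlast, hV⟩ := HasFactors.ofFn_iff.1 hsorted
  refine ⟨σ, G, hG, hG0, hGlast, hV, fun i => ?_⟩
  have hmem_iff := getElem_filter_append_filter_not (decide <| · ∈ S) (List.finRange r) (i := i)
    (by simp [← hσ])
  simpa [length_filter_mem_finRange, ← hσ, iff_comm] using hmem_iff

/-- if `𝒱₀` (encoded by the set `S` of indices, assumed closed under
isomorphism of factors) is a subfamily of the composition factors of `E` with no `Ext¹`
from `𝒱₀` to its complement, then `E` has a submodule `E′` whose composition factors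
(with multiplicity) are exactly the factors of `E` in `𝒱₀`, while `E/E′` has exactly the
remaining ones: there is a refiltration of `E` putting the `𝒱₀`-factors at the bottom. -/
theorem exists_submodule_with_prescribed_factors
    (A : Type) [Ring A] (E : Type) [AddCommGroup E] [Module A E]
    (r : ℕ) (V : Fin r → Type) [∀ i, AddCommGroup (V i)] [∀ i, Module A (V i)]
    (hsimple : ∀ i, IsSimpleModule A (V i))
    (F : Fin (r + 1) → Submodule A E) (hmono : Monotone F)
    (hbot : F 0 = ⊥) (htop : F (Fin.last r) = ⊤)
    (hfactor : ∀ i : Fin r, Nonempty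
      ((↥(F i.succ) ⧸ Submodule.comap (F i.succ).subtype (F i.castSucc)) ≃ₗ[A] V i))
    (S : Finset (Fin r))
    (hSiso : ∀ i j : Fin r, Nonempty (V i ≃ₗ[A] V j) → (i ∈ S ↔ j ∈ S))
    (hSext : ∀ i ∈ S, ∀ j ∉ S, Subsingleton (Ext1 A (V i) (V j))) :
    ∃ (σ : Equiv.Perm (Fin r)) (G : Fin (r + 1) → Submodule A E),
      Monotone G ∧ G 0 = ⊥ ∧ G (Fin.last r) = ⊤ ∧
      (∀ i : Fin r, Nonempty
        ((↥(G i.succ) ⧸ Submodule.comap (G i.succ).subtype (G i.castSucc)) ≃ₗ[A] V (σ i))) ∧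
      (∀ i : Fin r, (i : ℕ) < S.card ↔ σ i ∈ S) := by
  obtain ⟨σ, G, hG, hG0, hGlast, hV, hσ⟩ := exists_submodule_with_prescribed_factors_general
    hmono hfactor S fun i hi j hj _ => ModuleCat.isZero_iff_subsingleton.2 (hSext i hi j hj)
  exact ⟨σ, G, hG, hG0.trans hbot, hGlast.trans htop, hV, hσ⟩

end
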